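/- Let (R, m) be a regular local ring containing a field and let I be a proper ideal of R with ht_R(I) = d. Write the set of minimal primes of I as {p_1, …, p_s} ∪ {q_1, …, q_t}, where ht_R(p_i) = d for all i and ht_R(q_j) > d for all j, and set I' = p_1 ∩ … ∩ p_s. Then H_I^d(R) ≅ H_{I'}^d(R). -/

import Mathlib

open CategoryTheory Opposite

noncomputable section

/-- Krull dimension of the support of a module. -/
def moduleSuppDim (R : Type) [CommRing R] (M : Type) [AddCommGroup M] [Module R M] :
    WithBot ℕ∞ :=
  Order.krullDim (Module.support R M)

/-- `M` has injective dimension at most `n` (as `R`-module), characterized by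
vanishing of `Ext^i(N, M)` for all `i > n`. -/
def injDimLE (R : Type) [CommRing R] (M : Type) [AddCommGroup M] [Module R M] (n : ℕ) : Prop :=
  ∀ (N : ModuleCat R) (i : ℕ), n < i →
    Subsingleton (((Ext R (ModuleCat R) i).obj (op N)).obj (ModuleCat.of R M))

/-- The injective dimension of `M` as an `R`-module, valued in `ℕ∞`. -/
def injDim (R : Type) [CommRing R] (M : Type) [AddCommGroup M] [Module R M] : ℕ∞ :=
  sInf {n : ℕ∞ | ∃ m : ℕ, (m : ℕ∞) = n ∧ injDimLE R M m}

/-- The height of an ideal: the infimum of the heights of primes containing it. -/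
def idealHeight (R : Type) [CommRing R] (I : Ideal R) : ℕ∞ :=
  sInf {h : ℕ∞ | ∃ p : PrimeSpectrum R, I ≤ p.asIdeal ∧ Order.height p = h}

/-- A regular local ring: a Noetherian local ring whose maximal ideal can be generated
by `dim R` elements. -/
def IsRegularLocal (R : Type) [CommRing R] [IsLocalRing R] : Prop :=
  IsNoetherianRing R ∧
    ∃ s : Finset R, Ideal.span (s : Set R) = IsLocalRing.maximalIdeal R ∧
      (s.card : WithBot ℕ∞) = ringKrullDim R

/-- A ring contains a field if some subring of it is a field. -/
def ContainsField (R : Type) [CommRing R] : Prop :=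
  ∃ k : Subring R, IsField k

/-- The underlying module of the `i`-th local cohomology of `R` with support in `I`. -/
abbrev LocalCohomologyMod (R : Type) [CommRing R] (I : Ideal R) (i : ℕ) : Type :=
  (localCohomology I i).obj (ModuleCat.of R R)

end

/-!
Let `J = q₁ ∩ ⋯ ∩ q_t`.  Since `I` and `I' ∩ J` have the same radical, they have the same local
cohomology, and `ht J > d`.  The kernel of `R ⧸ (I' ∩ J)^t → R ⧸ I'^t` is killed by `J^t`, hence is
filtered by modules `R ⧸ p` with `p ⊇ J` prime, so `ht p > d`.  As `R` is Cohen–Macaulay,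
`Ext^i(R ⧸ p, R) = 0` for `i < ht p`: the case of the residue field is a regular sequence argument,
and one descends to smaller primes by multiplying by an element of the maximal ideal outside `p` and
applying Nakayama's lemma.  Therefore `Ext^d(R ⧸ I'^t, R) → Ext^d(R ⧸ (I' ∩ J)^t, R)` is bijective
for every `t`, and passing to the colimit over `t` gives the isomorphism.
-/

universe u v w

section ExtFunctor

theorem quasiIso_of_forall_moduleCat {R : Type u} [Ring R] {S T : ShortComplex (ModuleCat.{v} R)}
    (φ : S ⟶ T)
    (inj : ∀ x : S.X₂, S.g x = 0 → (∃ y, T.f y = φ.τ₂ x) → ∃ z, S.f z = x)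
    (surj : ∀ x : T.X₂, T.g x = 0 → ∃ w, S.g w = 0 ∧ ∃ y, T.f y = x - φ.τ₂ w) :
    ShortComplex.QuasiIso φ := by
  let γ : ShortComplex.LeftHomologyMapData φ S.moduleCatLeftHomologyData
    T.moduleCatLeftHomologyData := default
  have φK_coe (x : LinearMap.ker S.g.hom) : (γ.φK x : LinearMap.ker T.g.hom).1 = φ.τ₂ x.1 :=
    congr($(γ.commi) x)
  have φH_mk (x : LinearMap.ker S.g.hom) : γ.φH (S.moduleCatLeftHomologyData.π x) =
      T.moduleCatLeftHomologyData.π (γ.φK x) :=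
    congr($(γ.commπ) x).symm
  rw [γ.quasiIso_iff, ConcreteCategory.isIso_iff_bijective]
  constructor
  · rw [injective_iff_map_eq_zero]
    intro a ha
    obtain ⟨x, rfl⟩ := Submodule.Quotient.mk_surjective _ a
    obtain ⟨y, hy⟩ := (Submodule.Quotient.mk_eq_zero _).1 ((φH_mk x).symm.trans ha)
    obtain ⟨z, hz⟩ := inj x.1 x.2 ⟨y, (congrArg Subtype.val hy).trans (φK_coe x)⟩
    exact (Submodule.Quotient.mk_eq_zero _).2 ⟨z, Subtype.ext hz⟩
  · intro b
    obtain ⟨x, rfl⟩ := Submodule.Quotient.mk_surjective _ b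
    obtain ⟨w, hw, y, hy⟩ := surj x.1 x.2
    refine ⟨S.moduleCatLeftHomologyData.π (⟨w, hw⟩ : LinearMap.ker S.g.hom), ?_⟩
    refine (φH_mk _).trans (Eq.symm ?_)
    refine (Submodule.Quotient.eq (LinearMap.range T.moduleCatToCycles)).2 ⟨y, Subtype.ext ?_⟩
    exact hy.trans (congrArg (x.1 - ·) (φK_coe ⟨w, hw⟩).symm)

theorem isIso_leftDerived_map_of_quasiIsoAt {C : Type u} [Category.{v} C] [Abelian C]
    [EnoughProjectives C] {D : Type*} [Category* D] [Abelian D] {X Y : C} (F : C ⥤ D)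
    [F.Additive] {f : X ⟶ Y} {P : ProjectiveResolution X} {Q : ProjectiveResolution Y}
    (φ : P.Hom Q f) (n : ℕ)
    (hφ : QuasiIsoAt ((F.mapHomologicalComplex _).map φ.hom) n) :
    IsIso ((F.leftDerived n).map f) := by
  have comm : φ.hom.f 0 ≫ Q.π.f 0 = P.π.f 0 ≫ f := by
    simpa using! φ.hom_f_zero_comp_π_f_zero
  have : IsIso ((F.mapHomologicalComplex _ ⋙
      HomologicalComplex.homologyFunctor D (ComplexShape.down ℕ) n).map φ.hom) :=
    (quasiIsoAt_iff_isIso_homologyMap _ n).1 hφ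
  have : IsIso ((F.leftDerived n).map f ≫ (Q.isoLeftDerivedObj F n).hom) := by
    rw [ProjectiveResolution.isoLeftDerivedObj_hom_naturality f P Q φ.hom comm F n]
    infer_instance
  exact IsIso.of_isIso_comp_right _ (Q.isoLeftDerivedObj F n).hom

variable {C : Type u} [Category.{v} C] [Abelian C] [HasExt.{w} C]

theorem extMk_eq_zero_iff_exists_d_next_comp {X Y : C} (P : ProjectiveResolution X) {n : ℕ}
    (f : P.complex.X n ⟶ Y) (hf : P.complex.d (n + 1) n ≫ f = 0) :
    P.extMk f (n + 1) rfl hf = 0 ↔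
      ∃ g : P.complex.X ((ComplexShape.down ℕ).next n) ⟶ Y, P.complex.d n _ ≫ g = f := by
  cases n with
  | zero =>
    -- `next 0 = 0` in `ComplexShape.down ℕ`, so the right-hand side only says `f = 0` here.
    have hX : Limits.IsZero (P.cochainComplex.X 1) :=
      P.cochainComplex.isZero_of_isStrictlyLE 0 1 (by lia)
    rw [← P.extEquivCohomologyClass.apply_eq_iff_eq, P.extEquivCohomologyClass_extMk,
      P.extEquivCohomologyClass_zero, CochainComplex.HomComplex.CohomologyClass.mk_eq_zero_iff,
      CochainComplex.HomComplex.Cocycle.toSingleMk_mem_coboundaries_iff _ _ _ _ _ 1 (by lia)]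
    constructor
    · rintro ⟨g, hg⟩
      refine ⟨0, ?_⟩
      rw [hX.eq_of_src g 0, Limits.comp_zero] at hg
      rw [Limits.comp_zero, ← cancel_epi (P.cochainComplexXIso (-(0 : ℕ)) 0 rfl).hom,
        Limits.comp_zero]
      exact hg
    · rintro ⟨g, rfl⟩
      exact ⟨0, by simp⟩
  | succ n =>
    rw [P.extMk_eq_zero_iff f (n + 2) rfl hf n rfl, ChainComplex.next_nat_succ]

variable {R : Type*} [CommRing R] [Linear R C]

theorem quasiIsoAt_linearYoneda_of_bijective_precomp {X X' Y : C} {g : X' ⟶ X}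
    {P' : ProjectiveResolution X'} {P : ProjectiveResolution X} (φ : P'.Hom P g) (n : ℕ)
    (h : Function.Bijective fun a : Abelian.Ext.{w} X Y n ↦
      (Abelian.Ext.mk₀ g).comp a (zero_add n)) :
    QuasiIsoAt ((((linearYoneda R C).obj Y).rightOp.mapHomologicalComplex
      (ComplexShape.down ℕ)).map φ.hom) n := by
  let S := (HomologicalComplex.shortComplexFunctor' _ (ComplexShape.down ℕ) (n + 1) n
    ((ComplexShape.down ℕ).next n)).map
      ((((linearYoneda R C).obj Y).rightOp.mapHomologicalComplex (ComplexShape.down ℕ)).map φ.hom)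
  rw [quasiIsoAt_iff' _ (n + 1) n _ (ChainComplex.prev ℕ n) rfl]
  refine (ShortComplex.quasiIso_opMap_iff (ShortComplex.unopMap S)).2 ?_
  apply quasiIso_of_forall_moduleCat
  · rintro (x : P.complex.X n ⟶ Y) (hx : P.complex.d (n + 1) n ≫ x = 0)
      ⟨(y : P'.complex.X _ ⟶ Y), (hy : P'.complex.d n _ ≫ y = φ.hom.f n ≫ x)⟩
    refine (extMk_eq_zero_iff_exists_d_next_comp P x hx).1 (h.1 ?_)
    simp only [Abelian.Ext.comp_zero]
    rw [ProjectiveResolution.mk₀_comp_extMk x (n + 1) rfl hx φ,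
      extMk_eq_zero_iff_exists_d_next_comp]
    exact ⟨y, hy⟩
  · intro (x : P'.complex.X n ⟶ Y) (hx : P'.complex.d (n + 1) n ≫ x = 0)
    obtain ⟨a, ha⟩ := h.2 (P'.extMk x (n + 1) rfl hx)
    obtain ⟨w, hw, rfl⟩ := P.extMk_surjective a (n + 1) rfl
    simp only at ha
    rw [ProjectiveResolution.mk₀_comp_extMk w (n + 1) rfl hw φ, eq_comm, ← sub_eq_zero,
      P'.sub_extMk, extMk_eq_zero_iff_exists_d_next_comp] at ha
    exact ⟨w, hw, ha⟩

theorem isIso_ext_map_app_of_bijective_precomp [EnoughProjectives C] {X X' Y : C} (g : X' ⟶ X)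
    (n : ℕ)
    (h : Function.Bijective fun a : Abelian.Ext.{w} X Y n ↦
      (Abelian.Ext.mk₀ g).comp a (zero_add n)) :
    IsIso (((Ext R C n).map g.op).app Y) := by
  let P := projectiveResolution X
  let P' := projectiveResolution X'
  let φ : P'.Hom P g :=
    ⟨ProjectiveResolution.lift g P' P, by
      simpa using! ProjectiveResolution.lift_commutes_zero g P' P⟩
  have := isIso_leftDerived_map_of_quasiIsoAt ((linearYoneda R C).obj Y).rightOp φ n
    (quasiIsoAt_linearYoneda_of_bijective_precomp φ n h)
  exact inferInstanceAs
    (IsIso ((((linearYoneda R C).obj Y).rightOp.leftDerived n).map g).unop)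

end ExtFunctor

section ExtVanishing

variable {C : Type u} [Category.{v} C] [Abelian C] [HasExt.{w} C]

theorem subsingleton_ext_X₂ {S : ShortComplex C} (hS : S.ShortExact) (Y : C) (n : ℕ)
    (h₁ : Subsingleton (Abelian.Ext.{w} S.X₁ Y n)) (h₃ : Subsingleton (Abelian.Ext.{w} S.X₃ Y n)) :
    Subsingleton (Abelian.Ext.{w} S.X₂ Y n) := by
  refine subsingleton_of_forall_eq 0 fun x ↦ ?_
  obtain ⟨y, rfl⟩ := Abelian.Ext.contravariant_sequence_exact₂ hS Y x (h₁.elim _ _)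
  rw [h₃.elim y 0, Abelian.Ext.comp_zero]

theorem subsingleton_ext_of_isZero {X : C} (hX : Limits.IsZero X) (Y : C) (n : ℕ) :
    Subsingleton (Abelian.Ext.{w} X Y n) := by
  refine subsingleton_of_forall_eq 0 fun x ↦ ?_
  rw [← Abelian.Ext.mk₀_id_comp x, hX.eq_of_src (𝟙 X) 0, Abelian.Ext.mk₀_zero,
    Abelian.Ext.zero_comp]

theorem subsingleton_ext_of_iso {X X' : C} (e : X ≅ X') (Y : C) (n : ℕ)
    (h : Subsingleton (Abelian.Ext.{w} X Y n)) :
    Subsingleton (Abelian.Ext.{w} X' Y n) := by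
  have left_inv : Function.LeftInverse
      (fun x : Abelian.Ext.{w} X Y n ↦ (Abelian.Ext.mk₀ e.inv).comp x (zero_add n))
      fun x : Abelian.Ext.{w} X' Y n ↦ (Abelian.Ext.mk₀ e.hom).comp x (zero_add n) := fun x ↦ by
    simp
  exact left_inv.injective.subsingleton

theorem bijective_ext_precomp_of_subsingleton {S : ShortComplex C} (hS : S.ShortExact) (Y : C)
    (n : ℕ) (h : ∀ j ≤ n, Subsingleton (Abelian.Ext.{w} S.X₁ Y j)) :
    Function.Bijective fun a : Abelian.Ext.{w} S.X₃ Y n ↦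
      (Abelian.Ext.mk₀ S.g).comp a (zero_add n) := by
  refine ⟨?_, fun b ↦
    Abelian.Ext.contravariant_sequence_exact₂ hS Y b ((h n le_rfl).elim _ _)⟩
  cases n with
  | zero =>
    have := hS.epi_g
    exact Abelian.Ext.precomp_mk₀_injective_of_epi Y S.g
  | succ m =>
    refine (injective_iff_map_eq_zero (Abelian.Ext.precomp (Abelian.Ext.mk₀ S.g) Y
      (zero_add (m + 1)))).2 fun a ha ↦ ?_
    obtain ⟨y, rfl⟩ := Abelian.Ext.contravariant_sequence_exact₃ hS Y a ha (add_comm 1 m)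
    rw [(h m m.le_succ).elim y 0, Abelian.Ext.comp_zero]

end ExtVanishing

section ExtQuotientPrime

variable {R : Type u} [CommRing R]

theorem subsingleton_ext_of_support [IsNoetherianRing R] (Y : ModuleCat.{u} R) (n : ℕ) (M : Type u)
    [AddCommGroup M] [Module R M] [hM : Module.Finite R M]
    (h : ∀ p ∈ Module.support R M,
      Subsingleton (Abelian.Ext.{u} (ModuleCat.of R (R ⧸ p.asIdeal)) Y n)) :
    Subsingleton (Abelian.Ext.{u} (ModuleCat.of R M) Y n) := by
  revert h
  induction hM using IsNoetherianRing.induction_on_isQuotientEquivQuotientPrime R with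
  | subsingleton N =>
    exact fun _ ↦ subsingleton_ext_of_isZero (ModuleCat.isZero_of_subsingleton (.of R N)) Y n
  | quotient N p e =>
    intro h
    refine subsingleton_ext_of_iso e.symm.toModuleIso Y n (h p ?_)
    rw [e.support_eq, Module.support_eq_zeroLocus, Ideal.annihilator_quotient]
    exact (le_refl p.asIdeal :)
  | exact N₁ N₂ N₃ f g hf hg hfg ih₁ ih₃ =>
    intro h
    exact subsingleton_ext_X₂ (ModuleCat.shortComplex_shortExact
        (ShortComplex.moduleCatMk f g hfg.linearMap_comp_eq_zero) hfg hf hg) Y n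
      (ih₁ fun p hp ↦ h p (Module.support_subset_of_injective f hf hp))
      (ih₃ fun p hp ↦ h p (Module.support_subset_of_surjective g hg hp))

theorem subsingleton_ext_of_quotSMulTop [IsNoetherianRing R] {M N : Type u} [AddCommGroup M]
    [Module R M] [Module.Finite R M] [AddCommGroup N] [Module R N] [Module.Finite R N] {x : R}
    (hx : x ∈ Ring.jacobson R) (hreg : IsSMulRegular M x) (n : ℕ)
    (h : Subsingleton (Abelian.Ext.{u} (ModuleCat.of R (QuotSMulTop x M)) (ModuleCat.of R N)
      (n + 1))) :
    Subsingleton (Abelian.Ext.{u} (ModuleCat.of R M) (ModuleCat.of R N) n) := by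
  have hS := IsSMulRegular.smulShortComplex_shortExact (M := ModuleCat.of R M) hreg
  let E := Abelian.Ext.{u} (ModuleCat.of R M) (ModuleCat.of R N) n
  have htop : (⊤ : Submodule R E) ≤ Ring.jacobson R • ⊤ := fun y _ ↦ by
    obtain ⟨z, rfl⟩ : ∃ z : E,
        (Abelian.Ext.mk₀ (x • 𝟙 (ModuleCat.of R M))).comp z (zero_add n) = y :=
      Abelian.Ext.contravariant_sequence_exact₁ hS _ y (add_comm 1 n) (h.elim _ _)
    rw [Abelian.Ext.mk₀_smul, Abelian.Ext.smul_comp, Abelian.Ext.mk₀_id_comp]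
    exact Submodule.smul_mem_smul hx trivial
  have : Module.Finite R (ModuleCat.of R M) := ‹Module.Finite R M›
  have : Module.Finite R (ModuleCat.of R N) := ‹Module.Finite R N›
  have hbot := Submodule.eq_bot_of_le_smul_of_le_jacobson_bot _ _ (Module.Finite.fg_top) htop
    Ideal.jacobson_bot.ge
  exact (Submodule.subsingleton_iff R).1 (subsingleton_of_bot_eq_top hbot.symm)

theorem lt_of_mem_support_quotSMulTop {x : R} {p q : PrimeSpectrum R}
    (hx : x ∉ p.asIdeal) (hq : q ∈ Module.support R (QuotSMulTop x (R ⧸ p.asIdeal))) : p < q := by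
  rw [Module.support_quotSMulTop, Module.support_eq_zeroLocus, Ideal.annihilator_quotient] at hq
  obtain ⟨hpq, hxq⟩ := hq
  exact lt_of_le_of_ne hpq fun h ↦ hx (h ▸ hxq rfl)

theorem subsingleton_ext_quotient_prime_of_add_coheight_lt [IsNoetherianRing R] [IsLocalRing R]
    (M : Type u) [AddCommGroup M] [Module R M] [Module.Finite R M] {n : ℕ∞}
    (h : ∀ j : ℕ, j < n → Subsingleton (Abelian.Ext.{u}
      (ModuleCat.of R (R ⧸ IsLocalRing.maximalIdeal R)) (ModuleCat.of R M) j))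
    (p : PrimeSpectrum R) (i : ℕ) (hi : i + Order.coheight p < n) :
    Subsingleton (Abelian.Ext.{u} (ModuleCat.of R (R ⧸ p.asIdeal)) (ModuleCat.of R M) i) := by
  have : WellFoundedGT (PrimeSpectrum R) :=
    ⟨InvImage.wf PrimeSpectrum.asIdeal (wellFounded_gt (α := Ideal R))⟩
  induction p using WellFoundedGT.induction generalizing i with
  | ind p ih =>
  obtain rfl | hp := eq_or_ne p (IsLocalRing.closedPoint R)
  · exact h i (lt_of_le_of_lt le_self_add hi)
  have hlt : p.asIdeal < IsLocalRing.maximalIdeal R :=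
    lt_of_le_of_ne (IsLocalRing.le_maximalIdeal p.2.ne_top) fun h ↦ hp (PrimeSpectrum.ext h)
  obtain ⟨x, hxm, hxp⟩ := SetLike.exists_of_lt hlt
  have hreg : IsSMulRegular (R ⧸ p.asIdeal) x :=
    (isSMulRegular_quotient_iff_mem_of_smul_mem _ _).2 fun y hy ↦
      (p.2.mem_or_mem hy).resolve_left hxp
  refine subsingleton_ext_of_quotSMulTop (IsLocalRing.ringJacobson_eq_maximalIdeal R ▸ hxm)
    hreg i (subsingleton_ext_of_support _ _ _ fun q hq ↦ ?_)
  have hpq : p < q := lt_of_mem_support_quotSMulTop hxp hq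
  refine ih q hpq (i + 1) (lt_of_le_of_lt ?_ hi)
  calc ((i + 1 : ℕ) : ℕ∞) + Order.coheight q = i + (Order.coheight q + 1) := by
        push_cast; ring
    _ ≤ i + Order.coheight p := by gcongr; exact Order.coheight_add_one_le hpq

end ExtQuotientPrime

section Regular

open IsLocalRing RingTheory.Sequence
open scoped Pointwise

/-- A Cohen–Macaulay local ring: a Noetherian local ring whose depth equals its dimension.  The
depth condition is encoded by a regular sequence of length `dim R` in the maximal ideal. -/
class IsCohenMacaulayLocalRing (R : Type*) [CommRing R] : Prop extends
    IsLocalRing R, IsNoetherianRing R where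
  exists_isWeaklyRegular : ∃ rs : List R, (∀ r ∈ rs, r ∈ maximalIdeal R) ∧
    IsWeaklyRegular R rs ∧ rs.length = ringKrullDim R

variable {R : Type*} [CommRing R]

theorem exists_span_insert_erase_eq_maximalIdeal [IsLocalRing R] [DecidableEq R] {s : Finset R}
    (hs : Ideal.span (s : Set R) = maximalIdeal R) {x : R} (hx : x ∈ maximalIdeal R)
    (hx₂ : x ∉ maximalIdeal R ^ 2) :
    ∃ y ∈ s, Ideal.span (insert x (s.erase y) : Set R) = maximalIdeal R := by
  have hsm : ∀ y ∈ s, y ∈ maximalIdeal R := fun y hy ↦ hs ▸ Ideal.subset_span hy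
  obtain ⟨a, -, ha⟩ := Submodule.mem_span_finset.1 (hs.symm ▸ hx : x ∈ Ideal.span (s : Set R))
  obtain ⟨y, hy, hay⟩ : ∃ y ∈ s, IsUnit (a y) := by
    by_contra! hcon
    refine hx₂ (ha ▸ pow_two (maximalIdeal R) ▸ Ideal.sum_mem _ fun y hy ↦ ?_)
    exact Ideal.mul_mem_mul ((mem_maximalIdeal _).2 (hcon y hy)) (hsm y hy)
  have hy_mem : y ∈ Ideal.span (insert x (s.erase y) : Set R) := by
    refine (Ideal.unit_mul_mem_iff_mem _ hay).1 ?_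
    rw [← Finset.add_sum_erase s _ hy, smul_eq_mul, ← eq_sub_iff_add_eq] at ha
    rw [ha]
    refine sub_mem (Ideal.subset_span (Set.mem_insert _ _)) (Ideal.sum_mem _ fun z hz ↦ ?_)
    exact Ideal.mul_mem_left _ _ (Ideal.subset_span (Set.mem_insert_of_mem _ hz))
  refine ⟨y, hy, le_antisymm (Ideal.span_le.2 ?_) (hs ▸ Ideal.span_le.2 fun z hz ↦ ?_)⟩
  · exact Set.insert_subset hx fun z hz ↦ hsm z (Finset.mem_of_mem_erase hz)
  · rcases eq_or_ne z y with rfl | hzy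
    · exact hy_mem
    · exact Ideal.subset_span (Set.mem_insert_of_mem _ (Finset.mem_erase.2 ⟨hzy, hz⟩))

theorem isLocalRing_quotient_span_singleton [IsLocalRing R] {x : R} (hx : x ∈ maximalIdeal R) :
    IsLocalRing (R ⧸ Ideal.span {x}) := by
  have : Nontrivial (R ⧸ Ideal.span {x}) := Ideal.Quotient.nontrivial_iff.2 fun h ↦
    hx (Ideal.span_singleton_eq_top.1 h)
  exact .of_surjective' _ Ideal.Quotient.mk_surjective

theorem spanFinrank_maximalIdeal_quotient_add_one_le [IsLocalRing R] [IsNoetherianRing R] {x : R}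
    [IsLocalRing (R ⧸ Ideal.span {x})] (hx : x ∈ maximalIdeal R) (hx₂ : x ∉ maximalIdeal R ^ 2) :
    (maximalIdeal (R ⧸ Ideal.span {x})).spanFinrank + 1 ≤ (maximalIdeal R).spanFinrank := by
  classical
  obtain ⟨s, hcard, hs⟩ := Submodule.FG.exists_span_finset_card_eq_spanFinrank
    (IsNoetherian.noetherian (maximalIdeal R))
  obtain ⟨y, hy, hspan⟩ := exists_span_insert_erase_eq_maximalIdeal hs hx hx₂
  let π := Ideal.Quotient.mk (Ideal.span {x})
  have hmax : maximalIdeal (R ⧸ Ideal.span {x}) =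
      Ideal.span ((s.erase y).image π : Set (R ⧸ Ideal.span {x})) := by
    have hπx : π x = 0 := Ideal.Quotient.eq_zero_iff_mem.2 (Ideal.mem_span_singleton_self x)
    rw [← map_maximalIdeal_of_surjective π Ideal.Quotient.mk_surjective, ← hspan, Ideal.map_span,
      Set.image_insert_eq, hπx, Ideal.span_insert_zero, Finset.coe_image]
  calc _ ≤ ((s.erase y).image π).card + 1 := by
        gcongr
        rw [hmax, ← Set.ncard_coe_finset]
        exact Submodule.spanFinrank_span_le_ncard_of_finite (Finset.finite_toSet _)
    _ ≤ (s.erase y).card + 1 := by gcongr; exact Finset.card_image_le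
    _ = (maximalIdeal R).spanFinrank := by rw [Finset.card_erase_add_one hy, hcard]

theorem isRegularLocalRing_quotient_span_singleton [IsRegularLocalRing R] {x : R}
    (hx : x ∈ maximalIdeal R) (hx₂ : x ∉ maximalIdeal R ^ 2) :
    IsRegularLocalRing (R ⧸ Ideal.span {x}) := by
  have := isLocalRing_quotient_span_singleton hx
  refine .of_spanFinrank_maximalIdeal_le _ ?_
  refine ENat.WithBot.add_le_add_one_right_iff.1 ?_
  calc ((maximalIdeal (R ⧸ Ideal.span {x})).spanFinrank + 1 : WithBot ℕ∞)
      ≤ (maximalIdeal R).spanFinrank := by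
        exact_mod_cast spanFinrank_maximalIdeal_quotient_add_one_le hx hx₂
    _ = ringKrullDim R := IsRegularLocalRing.spanFinrank_maximalIdeal
    _ = (maximalIdeal R).height := maximalIdeal_height_eq_ringKrullDim.symm
    _ ≤ ringKrullDim (R ⧸ Ideal.span {x}) + 1 := Ideal.height_le_ringKrullDim_quotient_add_one hx

theorem exists_mem_maximalIdeal_notMem_sq_of_pos [IsLocalRing R] [IsNoetherianRing R]
    (hdim : 0 < ringKrullDim R) :
    ∃ x ∈ maximalIdeal R, x ∉ maximalIdeal R ^ 2 ∧ ∀ p ∈ minimalPrimes R, x ∉ p := by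
  have not_le_minimal : ∀ p ∈ minimalPrimes R, ¬ maximalIdeal R ≤ p := fun p hp hle ↦ by
    have hpm : p = maximalIdeal R := le_antisymm (le_maximalIdeal hp.1.1.ne_top) hle
    rw [← maximalIdeal_height_eq_ringKrullDim, Ideal.height_eq_zero_iff.2 (hpm ▸ hp)] at hdim
    exact hdim.false
  have not_le_sq : ¬ maximalIdeal R ≤ maximalIdeal R ^ 2 := fun h ↦ by
    have hbot : maximalIdeal R = ⊥ :=
      Submodule.eq_bot_of_le_smul_of_le_jacobson_bot _ _ (IsNoetherian.noetherian _)
        (by rwa [smul_eq_mul, ← pow_two]) (maximalIdeal_le_jacobson _)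
    obtain ⟨p, hp⟩ := Ideal.nonempty_minimalPrimes (bot_ne_top (α := Ideal R))
    exact not_le_minimal p hp (hbot ▸ bot_le)
  by_contra! hcon
  have hcover : (maximalIdeal R : Set R) ⊆
      ⋃ J ∈ insert (maximalIdeal R ^ 2) (minimalPrimes R), (J : Set R) := fun x hx ↦ by
    by_cases hx₂ : x ∈ maximalIdeal R ^ 2
    · exact Set.mem_biUnion (Set.mem_insert _ _) hx₂
    · obtain ⟨p, hp, hxp⟩ := hcon x hx hx₂
      exact Set.mem_biUnion (Set.mem_insert_of_mem _ hp) hxp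
  obtain ⟨J, rfl | hJ, hle⟩ := (Ideal.subset_union_prime_finite
    ((minimalPrimes.finite_of_isNoetherianRing R).insert _) (f := id)
    (maximalIdeal R ^ 2) (maximalIdeal R ^ 2)
    fun J hJ hne _ ↦ (hJ.resolve_left hne).1.1).1 hcover
  · exact not_le_sq hle
  · exact not_le_minimal J hJ hle

theorem isDomain_of_isPrime_span_singleton [IsLocalRing R] [IsNoetherianRing R] {x : R}
    (hx : x ∈ maximalIdeal R) (hmin : ∀ p ∈ minimalPrimes R, x ∉ p)
    (hprime : (Ideal.span {x}).IsPrime) : IsDomain R := by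
  obtain ⟨p, hp, hpx⟩ := Ideal.exists_minimalPrimes_le (bot_le (a := Ideal.span {x}))
  have hpb : p = ⊥ := by
    refine Submodule.eq_bot_of_le_smul_of_le_jacobson_bot (maximalIdeal R) p
      (IsNoetherian.noetherian _) (fun y hy ↦ ?_) (maximalIdeal_le_jacobson _)
    obtain ⟨z, rfl⟩ := Ideal.mem_span_singleton.1 (hpx hy)
    exact Ideal.mul_mem_mul hx ((hp.1.1.mem_or_mem hy).resolve_left (hmin p hp))
  have : (⊥ : Ideal R).IsPrime := hpb ▸ hp.1.1
  exact .of_bot_isPrime R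

theorem isDomain_of_isRegularLocalRing (R : Type*) [CommRing R] [IsRegularLocalRing R] :
    IsDomain R := by
  induction hn : (maximalIdeal R).spanFinrank using Nat.strong_induction_on generalizing R with
  | h n ih =>
  rcases Nat.eq_zero_or_pos n with rfl | hpos
  · have hbot := (Submodule.spanFinrank_eq_zero_iff_eq_bot (IsNoetherian.noetherian _)).1 hn
    have : (⊥ : Ideal R).IsPrime := hbot ▸ (maximalIdeal.isMaximal R).isPrime
    exact .of_bot_isPrime R
  · obtain ⟨x, hx, hx₂, hmin⟩ := exists_mem_maximalIdeal_notMem_sq_of_pos (R := R) <| by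
      rw [← IsRegularLocalRing.spanFinrank_maximalIdeal, hn]
      exact_mod_cast hpos
    have := isRegularLocalRing_quotient_span_singleton hx hx₂
    have hlt := hn ▸ spanFinrank_maximalIdeal_quotient_add_one_le hx hx₂
    exact isDomain_of_isPrime_span_singleton hx hmin
      ((Ideal.Quotient.isDomain_iff_prime _).1 (ih _ hlt _ rfl))

theorem isCohenMacaulayLocalRing_of_quotient_span_singleton [IsLocalRing R] [IsNoetherianRing R]
    {x : R} (hx : x ∈ maximalIdeal R) (hreg : IsSMulRegular R x)
    [IsCohenMacaulayLocalRing (R ⧸ Ideal.span {x})] : IsCohenMacaulayLocalRing R := by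
  obtain ⟨rs', hmem, hrs, hlen⟩ :=
    IsCohenMacaulayLocalRing.exists_isWeaklyRegular (R := R ⧸ Ideal.span {x})
  obtain ⟨rs, rfl⟩ := List.map_surjective_iff.2 Ideal.Quotient.mk_surjective rs'
  have : IsLocalHom (Ideal.Quotient.mk (Ideal.span {x})) :=
    .of_surjective _ Ideal.Quotient.mk_surjective
  refine ⟨x :: rs, List.forall_mem_cons.2 ⟨hx, fun r hr ↦ ?_⟩, ?_, ?_⟩
  · rw [← maximalIdeal_comap (Ideal.Quotient.mk (Ideal.span {x}))]
    exact hmem _ (List.mem_map_of_mem hr)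
  · have hspan : x • (⊤ : Ideal R) = Ideal.span {x} := by
      rw [← Submodule.ideal_span_singleton_smul, smul_eq_mul, Ideal.mul_top]
    exact .cons hreg <| ((Submodule.quotEquivOfEq _ _ hspan).isWeaklyRegular_congr rs).2 <|
      (isWeaklyRegular_map_algebraMap_iff (R := R) (R ⧸ Ideal.span {x}) _ rs).1 hrs
  · rw [← ringKrullDim_quotient_span_singleton_succ_eq_ringKrullDim hreg hx, ← hlen]
    simp

theorem isCohenMacaulayLocalRing_of_isRegularLocalRing (R : Type*) [CommRing R]
    [IsRegularLocalRing R] : IsCohenMacaulayLocalRing R := by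
  induction hn : (maximalIdeal R).spanFinrank using Nat.strong_induction_on generalizing R with
  | h n ih =>
  have hdim : n = ringKrullDim R := hn ▸ IsRegularLocalRing.spanFinrank_maximalIdeal
  rcases Nat.eq_zero_or_pos n with rfl | hpos
  · exact ⟨[], by simp, .nil R R, by simpa using hdim⟩
  · obtain ⟨x, hx, hx₂, -⟩ := exists_mem_maximalIdeal_notMem_sq_of_pos (R := R)
      (hdim ▸ by exact_mod_cast hpos)
    have := isDomain_of_isRegularLocalRing R
    have hx₀ : x ≠ 0 := fun h ↦ hx₂ (h ▸ zero_mem _)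
    have := isRegularLocalRing_quotient_span_singleton hx hx₂
    have := ih _ (hn ▸ spanFinrank_maximalIdeal_quotient_add_one_le hx hx₂) (R ⧸ _) rfl
    exact isCohenMacaulayLocalRing_of_quotient_span_singleton hx (.of_ne_zero hx₀)

end Regular

section CohenMacaulay

theorem subsingleton_ext_residueField_of_lt_ringKrullDim {R : Type u} [CommRing R]
    [IsCohenMacaulayLocalRing R] (i : ℕ) (hi : i < ringKrullDim R) :
    Subsingleton (Abelian.Ext.{u} (ModuleCat.of R (R ⧸ IsLocalRing.maximalIdeal R))
      (ModuleCat.of R R) i) := by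
  obtain ⟨rs, hmem, hreg, hlen⟩ := IsCohenMacaulayLocalRing.exists_isWeaklyRegular (R := R)
  have : Module.Finite R (ModuleCat.of R (R ⧸ IsLocalRing.maximalIdeal R)) :=
    inferInstanceAs (Module.Finite R (R ⧸ IsLocalRing.maximalIdeal R))
  have : Module.Finite R (ModuleCat.of R R) := inferInstanceAs (Module.Finite R R)
  refine ModuleCat.subsingleton_ext_of_exists_isRegular (IsLocalRing.maximalIdeal R) _ ?_ _ ?_ rs
    hmem (.of_isWeaklyRegular_of_mem_maximalIdeal _ hmem hreg) i (by exact_mod_cast hlen ▸ hi)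
  · change Module.support R (R ⧸ IsLocalRing.maximalIdeal R) ⊆ _
    rw [Module.support_eq_zeroLocus, Ideal.annihilator_quotient]
  · change IsLocalRing.maximalIdeal R • (⊤ : Ideal R) < ⊤
    rw [smul_eq_mul, Ideal.mul_top]
    exact Ne.lt_top (IsLocalRing.maximalIdeal.isMaximal R).ne_top

theorem subsingleton_ext_quotient_prime_of_lt_height {R : Type u} [CommRing R]
    [IsCohenMacaulayLocalRing R] (p : PrimeSpectrum R) (i : ℕ) (hi : i < p.asIdeal.height) :
    Subsingleton (Abelian.Ext.{u} (ModuleCat.of R (R ⧸ p.asIdeal)) (ModuleCat.of R R) i) := by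
  have hdim : ringKrullDim R = (IsLocalRing.maximalIdeal R).height :=
    IsLocalRing.maximalIdeal_height_eq_ringKrullDim.symm
  refine subsingleton_ext_quotient_prime_of_add_coheight_lt R
    (n := (IsLocalRing.maximalIdeal R).height)
    (fun j hj ↦ subsingleton_ext_residueField_of_lt_ringKrullDim j
      (hdim ▸ by exact_mod_cast hj)) p i ?_
  have hle : p.asIdeal.height + Order.coheight p ≤ (IsLocalRing.maximalIdeal R).height := by
    rw [← WithBot.coe_le_coe, ← hdim, ringKrullDim,
      Order.krullDim_eq_iSup_height_add_coheight_of_nonempty, WithBot.coe_le_coe,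
      PrimeSpectrum.height_eq_orderHeight]
    exact le_iSup (fun a : PrimeSpectrum R ↦ Order.height a + Order.coheight a) p
  have hfin : Order.coheight p ≠ ⊤ := fun h ↦ by
    rw [h, add_top, top_le_iff] at hle
    exact Ideal.height_ne_top (IsLocalRing.maximalIdeal.isMaximal R).ne_top hle
  exact ((ENat.add_lt_add_iff_right hfin).2 hi).trans_le hle

end CohenMacaulay

section LocalCohomology

theorem nonempty_localCohomology_iso_of_isIso_ext_map {R : Type u} [CommRing R] {A K : Ideal R}
    (hKA : K ≤ A) (n : ℕ) (Y : ModuleCat.{u} R)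
    (h : ∀ t : ℕ, IsIso (((Ext R (ModuleCat.{u} R) n).map
      (ModuleCat.ofHom (Submodule.mapQ (K ^ t) (A ^ t) LinearMap.id
        (Ideal.pow_right_mono hKA t))).op).app Y)) :
    Nonempty ((localCohomology A n).obj Y ≅ (localCohomology K n).obj Y) := by
  let α : localCohomology.ringModIdeals (localCohomology.idealPowersDiagram K) ⟶
      localCohomology.ringModIdeals (localCohomology.idealPowersDiagram A) :=
    { app t := ModuleCat.ofHom (Submodule.mapQ (K ^ unop t) (A ^ unop t) LinearMap.id
        (Ideal.pow_right_mono hKA _))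
      naturality s t f := by
        ext x
        obtain ⟨x, rfl⟩ := Submodule.Quotient.mk_surjective _ x
        rfl }
  let β := Functor.whiskerRight (Functor.whiskerRight (NatTrans.op α) (Ext R (ModuleCat.{u} R) n))
    ((evaluation _ _).obj Y)
  have : ∀ t, IsIso (β.app t) := fun t ↦ h (unop (unop t))
  have : IsIso β := NatIso.isIso_of_isIso_app β
  let e := asIso β
  have := localCohomology.hasColimitDiagram.{u, 0} (localCohomology.idealPowersDiagram A) n
  have := localCohomology.hasColimitDiagram.{u, 0} (localCohomology.idealPowersDiagram K) n
  exact ⟨Limits.colimitObjIsoColimitCompEvaluation _ Y ≪≫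
    Limits.HasColimit.isoOfNatIso e ≪≫
    (Limits.colimitObjIsoColimitCompEvaluation _ Y).symm⟩

theorem support_ker_mapQ_inf_pow_subset_zeroLocus {R : Type*} [CommRing R] (A J : Ideal R)
    (t : ℕ) :
    Module.support R (LinearMap.ker (Submodule.mapQ ((A ⊓ J) ^ t) (A ^ t) LinearMap.id
      (Ideal.pow_right_mono inf_le_left t))) ⊆ PrimeSpectrum.zeroLocus J := by
  intro p hp
  refine Ideal.IsPrime.le_of_pow_le (n := t) (hP := p.2)
    (le_trans (fun r hr ↦ ?_) (Module.annihilator_le_of_mem_support hp))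
  refine Module.mem_annihilator.2 fun ⟨y, hy⟩ ↦ Subtype.ext ?_
  obtain ⟨y, rfl⟩ := Submodule.Quotient.mk_surjective _ y
  have hyA : y ∈ A ^ t := (Submodule.Quotient.mk_eq_zero _).1 hy
  change Submodule.Quotient.mk (r • y) = (0 : R ⧸ (A ⊓ J) ^ t)
  rw [Submodule.Quotient.mk_eq_zero, smul_eq_mul, mul_comm]
  exact Ideal.pow_right_mono Ideal.mul_le_inf t (mul_pow A J t ▸ Ideal.mul_mem_mul hyA hr)

theorem nonempty_localCohomology_iso_inf_of_subsingleton_ext {R : Type u} [CommRing R]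
    [IsNoetherianRing R] (A J : Ideal R) (Y : ModuleCat.{u} R) (n : ℕ)
    (h : ∀ p : PrimeSpectrum R, J ≤ p.asIdeal → ∀ j ≤ n,
      Subsingleton (Abelian.Ext.{u} (ModuleCat.of R (R ⧸ p.asIdeal)) Y j)) :
    Nonempty ((localCohomology A n).obj Y ≅ (localCohomology (A ⊓ J) n).obj Y) := by
  refine nonempty_localCohomology_iso_of_isIso_ext_map inf_le_left n Y fun t ↦
    isIso_ext_map_app_of_bijective_precomp _ n ?_
  have hsurj : Function.Surjective (Submodule.mapQ ((A ⊓ J) ^ t) (A ^ t) LinearMap.id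
      (Ideal.pow_right_mono inf_le_left t)) := fun y ↦ by
    obtain ⟨y, rfl⟩ := Submodule.Quotient.mk_surjective _ y
    exact ⟨Submodule.Quotient.mk y, rfl⟩
  exact bijective_ext_precomp_of_subsingleton (LinearMap.shortExact_shortComplexKer hsurj) Y n
    fun j hj ↦ subsingleton_ext_of_support Y j _ fun p hp ↦
      h p (support_ker_mapQ_inf_pow_subset_zeroLocus A J t hp) j hj

theorem nonempty_localCohomology_iso_inf_of_lt_height {R : Type u} [CommRing R]
    [IsCohenMacaulayLocalRing R] (A J : Ideal R) {n : ℕ} (hJ : n < J.height) :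
    Nonempty ((localCohomology A n).obj (ModuleCat.of R R) ≅
      (localCohomology (A ⊓ J) n).obj (ModuleCat.of R R)) :=
  nonempty_localCohomology_iso_inf_of_subsingleton_ext A J _ n fun p hp j hj ↦
    subsingleton_ext_quotient_prime_of_lt_height p j <|
      lt_of_le_of_lt (by exact_mod_cast hj) (hJ.trans_le (Ideal.height_mono hp))

end LocalCohomology

theorem lt_height_sInf {R : Type*} [CommRing R] {S : Set (Ideal R)} (hS : S.Finite) {n : ℕ∞}
    (hn : n ≠ ⊤) (h : ∀ q ∈ S, n < q.height) : n < (sInf S).height := by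
  rw [← ENat.add_one_le_iff hn, Ideal.height_eq_inf_minimalPrimes]
  refine le_iInf₂ fun p hp ↦ ?_
  have hinf : hS.toFinset.inf id ≤ p := by
    rw [Finset.inf_id_eq_sInf, hS.coe_toFinset]
    exact hp.le
  obtain ⟨q, hq, hqp⟩ := hp.isPrime.inf_le'.1 hinf
  exact (Order.add_one_le_of_lt (h q (hS.mem_toFinset.1 hq))).trans (Ideal.height_mono hqp)

theorem stmt7_general {R : Type u} [CommRing R] [IsCohenMacaulayLocalRing R] (I : Ideal R) (d : ℕ)
    (P Q : Set (Ideal R)) (hPQ : I.minimalPrimes = P ∪ Q) (hQ : ∀ q ∈ Q, d < q.height) :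
    Nonempty ((localCohomology I d).obj (ModuleCat.of R R) ≃ₗ[R]
      (localCohomology (sInf P) d).obj (ModuleCat.of R R)) := by
  have hrad : I.radical = sInf P ⊓ sInf Q := by
    rw [← Ideal.sInf_minimalPrimes, hPQ, sInf_union]
  have hQfin : Q.Finite := (Ideal.finite_minimalPrimes_of_isNoetherianRing R I).subset
    (hPQ ▸ Set.subset_union_right)
  obtain ⟨e⟩ := nonempty_localCohomology_iso_inf_of_lt_height (sInf P) (sInf Q)
    (lt_height_sInf hQfin (ENat.natCast_ne_top d) hQ)
  have e' := localCohomology.isoOfSameRadical (J := I) (K := sInf P ⊓ sInf Q)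
    (by rw [← hrad, Ideal.radical_idem]) d
  exact ⟨(e'.app (ModuleCat.of R R) ≪≫ e.symm).toLinearEquiv⟩

theorem idealHeight_eq_height {R : Type} [CommRing R] (I : Ideal R) :
    idealHeight R I = I.height := by
  refine le_antisymm ?_ (le_sInf ?_)
  · rw [Ideal.height_eq_inf_minimalPrimes]
    refine le_iInf₂ fun p hp ↦ sInf_le ?_
    exact ⟨⟨p, hp.isPrime⟩, hp.le, (PrimeSpectrum.height_eq_orderHeight _).symm⟩
  · rintro _ ⟨p, hp, rfl⟩
    exact (Ideal.height_mono hp).trans_eq p.height_eq_orderHeight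

theorem isRegularLocalRing_of_isRegularLocal {R : Type} [CommRing R] [IsLocalRing R]
    (h : IsRegularLocal R) : IsRegularLocalRing R := by
  obtain ⟨_, s, hs, hcard⟩ := h
  refine .of_spanFinrank_maximalIdeal_le R ?_
  rw [← hcard, ← hs, ← Set.ncard_coe_finset]
  exact_mod_cast Submodule.spanFinrank_span_le_ncard_of_finite s.finite_toSet

/-- Regular local ring `R` containing a field, `I` a proper ideal with
`ht I = d`, whose set of minimal primes splits as `P ∪ Q` where every member of `P` has
height `d` and every member of `Q` has height `> d`.  With `I' = ⋂ P`, we have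
`H_I^d(R) ≅ H_{I'}^d(R)`. -/
theorem stmt7 (R : Type) [CommRing R] [IsLocalRing R]
    (hreg : IsRegularLocal R) (hfield : ContainsField R)
    (I : Ideal R) (hI : I ≠ ⊤) (d : ℕ) (hht : idealHeight R I = (d : ℕ∞))
    (P Q : Set (Ideal R))
    (hPQ : I.minimalPrimes = P ∪ Q)
    (hP : ∀ p ∈ P, idealHeight R p = (d : ℕ∞))
    (hQ : ∀ q ∈ Q, (d : ℕ∞) < idealHeight R q) :
    Nonempty (LocalCohomologyMod R I d ≃ₗ[R] LocalCohomologyMod R (sInf P) d) := by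
  have := isRegularLocalRing_of_isRegularLocal hreg
  have := isCohenMacaulayLocalRing_of_isRegularLocalRing R
  exact stmt7_general I d P Q hPQ fun q hq ↦ idealHeight_eq_height q ▸ hQ q hq
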